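/- Let $K$ be an algebraically closed field and let $\Gamma$ be a finite tree with a fixed cyclic ordering of the edges around each vertex (a Brauer tree of multiplicity one). Let $Q_\Gamma$ be the quiver whose vertices are the edges of $\Gamma$ and which has, for every vertex $s$ of $\Gamma$ and every edge $i$ incident to $s$, one arrow from $i$ to the edge following $i$ in the cyclic order around $s$ (a loop if $s$ is a leaf); thus every vertex $s$ of $\Gamma$ incident to an edge gives an oriented cycle of $Q_\Gamma$, and each vertex of $Q_\Gamma$ lies on exactly two of these cycles. Let $A=KQ_\Gamma/I$ be the basic Brauer tree algebra of $\Gamma$, where $ab$ denotes "first $a$, then $b$" and $I$ is generated by the products of two consecutive arrows lying on the cycles of different vertices of $\Gamma$ and, for each vertex $i$ of $Q_\Gamma$, by the difference of the two oriented cycles (each traversed once) starting at $i$. An $A$-cycle is a maximal ordered set of nonrepeating arrows of $Q_\Gamma$ such that the product in $A$ of any two neighboring arrows is nonzero; a vertex belongs to it if it is the source or the target of one of its arrows. Let $K^b(A)$ be the bounded homotopy category of finitely generated projective left $A$-modules; a bounded complex $T$ of finitely generated projective left $A$-modules is called partial tilting if $\mathrm{Hom}_{D^b(A)}(T,T[k])=0$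 for all $k\neq 0$. Let $i,j$ be vertices of $Q_\Gamma$ with trivial paths $e_i,e_j$, and let $P_i$ and $P_j$ be stalk complexes of the indecomposable projective modules $Ae_i$ and $Ae_j$, concentrated in arbitrary degrees, such that $P_i\oplus P_j$ is a partial tilting complex. Then $\mathrm{Hom}_{K^b(A)}(P_i,P_j)\neq 0$ if and only if $P_i$ and $P_j$ are concentrated in the same degree and the vertices $i$ and $j$ belong to the same $A$-cycle. -/

import Mathlib

universe u v w

open CategoryTheory

noncomputable section

/-! ### The path algebra of a quiver with finitely many vertices -/

/-- The path algebra `K Q`: the vector space with basis all paths of the quiver (including the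
trivial path at each vertex). -/
def PathAlgebra (K : Type u) [Field K] (Q : Type v) [Quiver.{v} Q] : Type (max u v) :=
  (Σ x y : Q, Quiver.Path x y) →₀ K

namespace PathAlgebra

variable (K : Type u) [Field K] (Q : Type v) [Quiver.{v} Q]

instance : AddCommGroup (PathAlgebra K Q) :=
  inferInstanceAs (AddCommGroup ((Σ x y : Q, Quiver.Path x y) →₀ K))

instance : Module K (PathAlgebra K Q) :=
  inferInstanceAs (Module K ((Σ x y : Q, Quiver.Path x y) →₀ K))

variable {Q}

/-- The basis element of the path algebra given by a path. -/
def ofPath {x y : Q} (p : Quiver.Path x y) : PathAlgebra K Q :=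
  Finsupp.single ⟨x, y, p⟩ 1

open Classical in
/-- The product of two paths: the concatenation "first `p`, then `q`" if `p` ends where `q`
starts, and `0` otherwise. -/
def pathMul (p q : Σ x y : Q, Quiver.Path x y) : PathAlgebra K Q :=
  if h : p.2.1 = q.1 then ofPath K (p.2.2.comp (q.2.2.cast h.symm rfl)) else 0

variable (Q)

/-- The multiplication of the path algebra, the bilinear extension of `pathMul`. -/
def mulLin : PathAlgebra K Q →ₗ[K] PathAlgebra K Q →ₗ[K] PathAlgebra K Q :=
  Finsupp.linearCombination K fun p => Finsupp.linearCombination K fun q => pathMul K p q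

instance : Mul (PathAlgebra K Q) := ⟨fun a b => mulLin K Q a b⟩

variable {Q}

theorem mul_def (a b : PathAlgebra K Q) : a * b = mulLin K Q a b := rfl

theorem ofPath_mul_ofPath {x y x' y' : Q} (p : Quiver.Path x y) (q : Quiver.Path x' y') :
    ofPath K p * ofPath K q = pathMul K ⟨x, y, p⟩ ⟨x', y', q⟩ := by
  rw [mul_def]
  unfold mulLin ofPath
  erw [Finsupp.linearCombination_single, one_smul, Finsupp.linearCombination_single, one_smul]

theorem ofPath_mul_comp {x y z : Q} (p : Quiver.Path x y) (q : Quiver.Path y z) :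
    ofPath K p * ofPath K q = ofPath K (p.comp q) := by
  rw [ofPath_mul_ofPath, pathMul, dif_pos rfl]
  rfl

theorem ofPath_mul_of_ne {x y x' y' : Q} (p : Quiver.Path x y) (q : Quiver.Path x' y')
    (h : y ≠ x') : ofPath K p * ofPath K q = 0 := by
  rw [ofPath_mul_ofPath, pathMul, dif_neg h]

variable {K} in
theorem induction_ofPath {P : PathAlgebra K Q → Prop} (a : PathAlgebra K Q) (h0 : P 0)
    (hadd : ∀ a b, P a → P b → P (a + b))
    (hp : ∀ (c : K) (x y : Q) (p : Quiver.Path x y), P (c • ofPath K p)) : P a := by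
  refine Finsupp.induction_linear (motive := P) a h0 hadd ?_
  rintro ⟨x, y, p⟩ c
  have h := hp c x y p
  unfold ofPath at h
  erw [Finsupp.smul_single, smul_eq_mul, mul_one] at h
  exact h

theorem smul_mul' (c : K) (a b : PathAlgebra K Q) : (c • a) * b = c • (a * b) := by
  simp [mul_def]

theorem mul_smul' (c : K) (a b : PathAlgebra K Q) : a * (c • b) = c • (a * b) := by
  simp [mul_def]

theorem add_mul' (a b c : PathAlgebra K Q) : (a + b) * c = a * c + b * c := by
  simp [mul_def]

theorem mul_add' (a b c : PathAlgebra K Q) : a * (b + c) = a * b + a * c := by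
  simp [mul_def]

theorem zero_mul' (a : PathAlgebra K Q) : 0 * a = 0 := by
  simp [mul_def]

theorem mul_zero' (a : PathAlgebra K Q) : a * 0 = 0 := by
  simp [mul_def]

theorem ofPath_assoc {x y x' y' x'' y'' : Q} (p : Quiver.Path x y) (q : Quiver.Path x' y')
    (r : Quiver.Path x'' y'') :
    ofPath K p * ofPath K q * ofPath K r = ofPath K p * (ofPath K q * ofPath K r) := by
  by_cases h : y = x'
  · subst h
    by_cases h' : y' = x''
    · subst h'
      simp only [ofPath_mul_comp, Quiver.Path.comp_assoc]
    · rw [ofPath_mul_comp, ofPath_mul_of_ne K _ _ h', ofPath_mul_of_ne K _ _ h', mul_zero']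
  · rw [ofPath_mul_of_ne K _ _ h, zero_mul']
    by_cases h' : y' = x''
    · subst h'
      rw [ofPath_mul_comp, ofPath_mul_of_ne K _ _ h]
    · rw [ofPath_mul_of_ne K _ _ h', mul_zero']

theorem mul_assoc' (a b c : PathAlgebra K Q) : a * b * c = a * (b * c) := by
  induction a using induction_ofPath with
  | h0 => simp only [zero_mul']
  | hadd a a' h h' => simp only [add_mul', h, h']
  | hp k x y p =>
    induction b using induction_ofPath with
    | h0 => simp only [zero_mul', mul_zero']
    | hadd a a' h h' => simp only [add_mul', mul_add', h, h']
    | hp k' x' y' p' =>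
      induction c using induction_ofPath with
      | h0 => simp only [mul_zero']
      | hadd a a' h h' => simp only [mul_add', h, h']
      | hp k'' x'' y'' p'' => simp only [smul_mul', mul_smul', ofPath_assoc]

variable [Fintype Q]

variable (Q) in
/-- The identity is the sum of the trivial paths. -/
instance : One (PathAlgebra K Q) := ⟨∑ x : Q, ofPath K (Quiver.Path.nil : Quiver.Path x x)⟩

theorem one_def : (1 : PathAlgebra K Q) = ∑ x : Q, ofPath K (Quiver.Path.nil : Quiver.Path x x) :=
  rfl

theorem one_mul' (a : PathAlgebra K Q) : 1 * a = a := by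
  induction a using induction_ofPath with
  | h0 => exact mul_zero' K _
  | hadd a a' h h' => rw [mul_add', h, h']
  | hp k x y p =>
    rw [mul_smul', one_def, mul_def, map_sum, LinearMap.sum_apply]
    simp only [← mul_def]
    rw [Finset.sum_eq_single x, ofPath_mul_comp, Quiver.Path.nil_comp]
    · intro z _ hz
      exact ofPath_mul_of_ne K _ _ hz
    · simp

theorem mul_one' (a : PathAlgebra K Q) : a * 1 = a := by
  induction a using induction_ofPath with
  | h0 => exact zero_mul' K _
  | hadd a a' h h' => rw [add_mul', h, h']
  | hp k x y p =>
    rw [smul_mul', one_def, mul_def, map_sum]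
    simp only [← mul_def]
    rw [Finset.sum_eq_single y, ofPath_mul_comp, Quiver.Path.comp_nil]
    · intro z _ hz
      exact ofPath_mul_of_ne K _ _ hz.symm
    · simp

instance : Ring (PathAlgebra K Q) :=
  { (inferInstance : AddCommGroup (PathAlgebra K Q)),
    (inferInstance : Mul (PathAlgebra K Q)),
    (inferInstance : One (PathAlgebra K Q)) with
    left_distrib := mul_add' K
    right_distrib := add_mul' K
    zero_mul := zero_mul' K
    mul_zero := mul_zero' K
    mul_assoc := mul_assoc' K
    one_mul := one_mul' K
    mul_one := mul_one' K }

instance : Algebra K (PathAlgebra K Q) :=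
  Algebra.ofModule (smul_mul' K) (mul_smul' K)

end PathAlgebra

/-! ### Brauer trees of multiplicity one and their algebras -/

/-- A Brauer tree of multiplicity one with vertex set `V`: a tree together with a cyclic ordering
of the edges incident to each vertex. A dart `d` of the graph is the edge `d.edge` seen as incident
to its vertex `d.fst`; `next d` is the edge that follows it in the cyclic order around `d.fst`. -/
structure BrauerTree (V : Type v) where
  graph : SimpleGraph V
  isTree : graph.IsTree
  next : Equiv.Perm graph.Dart
  next_fst : ∀ d, (next d).fst = d.fst
  next_cyclic : ∀ d d' : graph.Dart, d.fst = d'.fst → next.SameCycle d d'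

namespace BrauerTree

variable {V : Type v} [Fintype V] (T : BrauerTree V)

/-- The edges of the tree, which are the vertices of its quiver. -/
def Edge : Type v := T.graph.edgeSet

instance : Fintype T.Edge := by
  classical
  exact @Fintype.ofFinite _ (inferInstanceAs (Finite T.graph.edgeSet))

variable {T} in
/-- The edge underlying a dart. -/
def edgeOf (d : T.graph.Dart) : T.Edge := ⟨d.edge, d.edge_mem⟩

/-- The Brauer quiver: for every vertex of the tree and every edge `i` incident to it there is
one arrow from `i` to the edge that follows `i` around this vertex (a loop if the vertex is a leaf).
So the arrows are indexed by the darts. -/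
instance : Quiver T.Edge where
  Hom i j := {d : T.graph.Dart // edgeOf d = i ∧ edgeOf (T.next d) = j}

/-- The arrow given by a dart. -/
def arrow (d : T.graph.Dart) : edgeOf d ⟶ edgeOf (T.next d) := ⟨d, rfl, rfl⟩

variable (K : Type u) [Field K]

/-- The arrow given by a dart, as an element of the path algebra. -/
def arrowElt (d : T.graph.Dart) : PathAlgebra K T.Edge :=
  PathAlgebra.ofPath K (T.arrow d).toPath

/-- The product of all arrows of the oriented cycle around `d.fst`, starting at `d.edge`. -/
def cycleElt (d : T.graph.Dart) : PathAlgebra K T.Edge :=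
  ((List.range (Function.minimalPeriod T.next d)).map
    fun k => T.arrowElt K ((T.next ^ k) d)).prod

/-- The defining relations: the product of two consecutive arrows that lie on the oriented cycles
of different vertices of the tree is zero, and the two oriented cycles starting at a given
vertex of the quiver are equal. -/
inductive Rel : PathAlgebra K T.Edge → PathAlgebra K T.Edge → Prop
  | zero (d d' : T.graph.Dart) (hcomp : edgeOf (T.next d) = edgeOf d') (hne : d.fst ≠ d'.fst) :
      Rel (T.arrowElt K d * T.arrowElt K d') 0
  | cycle (d : T.graph.Dart) : Rel (T.cycleElt K d) (T.cycleElt K d.symm)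

/-- The basic Brauer tree algebra of multiplicity one: the quotient of the path algebra by the
two-sided ideal generated by the relations. -/
abbrev Alg : Type (max u v) := RingQuot (T.Rel K)

/-- The projection of the path algebra onto the Brauer tree algebra. -/
def proj : PathAlgebra K T.Edge →ₐ[K] T.Alg K := RingQuot.mkAlgHom K (T.Rel K)

/-- The idempotent `e_i`. -/
def idem (i : T.Edge) : T.Alg K :=
  T.proj K (PathAlgebra.ofPath K (Quiver.Path.nil : Quiver.Path i i))

/-- A list of pairwise distinct arrows such that the product in the algebra of any two neighboring
ones is nonzero. -/
def IsArrowChain (L : List T.graph.Dart) : Prop :=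
  L.Nodup ∧ L.IsChain fun d d' => T.proj K (T.arrowElt K d) * T.proj K (T.arrowElt K d') ≠ 0

/-- An `A`-cycle: a maximal ordered set of nonrepeating arrows such that the product of any two
neighboring arrows is nonzero. -/
def IsACycle (L : List T.graph.Dart) : Prop :=
  T.IsArrowChain K L ∧ ∀ L', T.IsArrowChain K L' → L.Sublist L' → L' = L

/-- The vertex `i` of the quiver is the source or the target of some arrow in `L`. -/
def MemArrows (i : T.Edge) (L : List T.graph.Dart) : Prop :=
  ∃ d ∈ L, edgeOf d = i ∨ edgeOf (T.next d) = i

/-- Two vertices of the quiver belong to the same `A`-cycle. -/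
def SameACycle (i j : T.Edge) : Prop :=
  ∃ L, T.IsACycle K L ∧ T.MemArrows i L ∧ T.MemArrows j L

/-- The projective left module `A e_i`. -/
abbrev projMod (i : T.Edge) : ModuleCat.{max u v} (T.Alg K) :=
  ModuleCat.of (T.Alg K) (Ideal.span {T.idem K i})

end BrauerTree

/-! ### Perfect complexes, `K^b(A)` and partial tilting complexes -/

/-- Bounded complexes of finitely generated projective left modules. -/
def perfectComplexes (A : Type w) [Ring A] :
    ObjectProperty (CochainComplex (ModuleCat.{w} A) ℤ) := fun X =>
  (∃ a b : ℤ, ∀ k, k < a ∨ b < k → Limits.IsZero (X.X k)) ∧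
    ∀ k, Module.Finite A (X.X k) ∧ Module.Projective A (X.X k)

/-- `K^b(A)`, the bounded homotopy category of finitely generated projective left modules, as a
full subcategory of the homotopy category of all complexes of left modules. -/
abbrev Kb (A : Type w) [Ring A] : Type _ :=
  ((perfectComplexes A).map
    (HomotopyCategory.quotient (ModuleCat.{w} A) (ComplexShape.up ℤ))).FullSubcategory

/-- A bounded complex of finitely generated projective modules as an object of `K^b(A)`. -/
def Kb.of {A : Type w} [Ring A] (X : CochainComplex (ModuleCat.{w} A) ℤ)
    (hX : perfectComplexes A X) : Kb A :=
  ⟨(HomotopyCategory.quotient _ _).obj X, ObjectProperty.prop_map_obj _ _ hX⟩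

/-- A perfect complex `X` is partial tilting if `Hom (X, X[k]) = 0` in the derived category
for all `k ≠ 0`. -/
def IsPartialTilting {A : Type u} [Ring A] [HasDerivedCategory.{w} (ModuleCat.{u} A)]
    (X : CochainComplex (ModuleCat.{u} A) ℤ) : Prop :=
  perfectComplexes A X ∧ ∀ k : ℤ, k ≠ 0 →
    ∀ f : DerivedCategory.Q.obj X ⟶ (DerivedCategory.Q.obj X)⟦k⟧, f = 0

namespace BrauerTree

variable {V : Type v} [Fintype V] (T : BrauerTree V) (K : Type u) [Field K]

/-- `X` is (isomorphic to) the stalk complex of `A e_i` concentrated in degree `p`. -/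
def IsStalk (X : CochainComplex (ModuleCat.{max u v} (T.Alg K)) ℤ) (i : T.Edge) (p : ℤ) : Prop :=
  Nonempty (X ≅ (HomologicalComplex.single _ (ComplexShape.up ℤ) p).obj (T.projMod K i))

theorem idem_mul_self (i : T.Edge) : T.idem K i * T.idem K i = T.idem K i := by
  unfold idem
  rw [← map_mul, PathAlgebra.ofPath_mul_comp, Quiver.Path.comp_nil]

theorem projective_projMod (i : T.Edge) : Module.Projective (T.Alg K) (T.projMod K i) := by
  have hmem : T.idem K i ∈ Ideal.span {T.idem K i} := Ideal.subset_span rfl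
  refine Module.Projective.of_split (M := T.Alg K)
    (Submodule.subtype (Ideal.span {T.idem K i}))
    (LinearMap.toSpanSingleton (T.Alg K) (Ideal.span {T.idem K i}) ⟨T.idem K i, hmem⟩) ?_
  ext ⟨x, hx⟩
  obtain ⟨a, rfl⟩ := Ideal.mem_span_singleton'.1 hx
  simp [mul_assoc, idem_mul_self]

theorem finite_projMod (i : T.Edge) : Module.Finite (T.Alg K) (T.projMod K i) :=
  Module.Finite.iff_fg.2 ⟨{T.idem K i}, by simp [Ideal.span]⟩

variable {T K} in
theorem IsStalk.perfect {X : CochainComplex (ModuleCat.{max u v} (T.Alg K)) ℤ} {i : T.Edge} {p : ℤ}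
    (h : T.IsStalk K X i p) : perfectComplexes (T.Alg K) X := by
  obtain ⟨φ⟩ := h
  have e (k : ℤ) : X.X k ≅
      ((HomologicalComplex.single _ (ComplexShape.up ℤ) p).obj (T.projMod K i)).X k :=
    (HomologicalComplex.eval _ _ k).mapIso φ
  have hz (k : ℤ) (hk : k ≠ p) : Limits.IsZero (X.X k) :=
    (HomologicalComplex.isZero_single_obj_X _ _ _ _ hk).of_iso (e k)
  refine ⟨⟨p, p, fun k hk => hz k (by lia)⟩, fun k => ?_⟩
  by_cases hk : k = p
  · have f : T.projMod K i ≃ₗ[T.Alg K] X.X k :=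
      ((e k).trans (HomologicalComplex.singleObjXIsoOfEq _ _ _ _ hk)).toLinearEquiv.symm
    have := finite_projMod T K i
    have := projective_projMod T K i
    exact ⟨Module.Finite.equiv f, Module.Projective.of_equiv f⟩
  · have : Subsingleton (X.X k) := ModuleCat.subsingleton_of_isZero (hz k hk)
    exact ⟨inferInstance, inferInstance⟩

end BrauerTree

end

noncomputable section

namespace BrauerTree

variable {V : Type v} (T : BrauerTree V) (K : Type u) [Field K]

/-! ### Cycles of darts -/

theorem edgeOf_symm (d : T.graph.Dart) : edgeOf d.symm = edgeOf d :=
  Subtype.ext (SimpleGraph.Dart.edge_symm d)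

theorem exists_edgeOf_eq (i : T.Edge) : ∃ d : T.graph.Dart, edgeOf d = i := by
  obtain ⟨e, he⟩ := i
  induction e using Sym2.ind with
  | _ x y => exact ⟨⟨(x, y), he⟩, rfl⟩

theorem next_pow_fst (d : T.graph.Dart) (k : ℕ) : ((T.next ^ k) d).fst = d.fst := by
  induction k with
  | zero => rfl
  | succ k ih => rw [pow_succ', Equiv.Perm.mul_apply, T.next_fst, ih]

/-- The number of edges around the vertex `d.fst`. -/
def period (d : T.graph.Dart) : ℕ := Function.minimalPeriod T.next d

theorem next_pow_period (d : T.graph.Dart) : (T.next ^ T.period d) d = d := by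
  rw [← Equiv.Perm.iterate_eq_pow]
  exact Function.iterate_minimalPeriod

/-- The first `k` darts met when turning around `d.fst` from `d` on. -/
def arcDarts (d : T.graph.Dart) (k : ℕ) : List T.graph.Dart :=
  (List.range k).map fun k => (T.next ^ k) d

theorem arcDarts_succ (d : T.graph.Dart) (k : ℕ) :
    T.arcDarts d (k + 1) = T.arcDarts d k ++ [(T.next ^ k) d] := by
  simp [arcDarts, List.range_succ]

theorem length_arcDarts (d : T.graph.Dart) (k : ℕ) : (T.arcDarts d k).length = k := by
  simp [arcDarts]

theorem fst_of_mem_arcDarts {d d' : T.graph.Dart} {k : ℕ} (h : d' ∈ T.arcDarts d k) :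
    d'.fst = d.fst := by
  obtain ⟨l, -, rfl⟩ := List.mem_map.1 h
  exact T.next_pow_fst d l

theorem nodup_arcDarts_period (d : T.graph.Dart) : (T.arcDarts d (T.period d)).Nodup := by
  refine List.Nodup.map_on ?_ List.nodup_range
  intro k hk l hl h
  rw [← Equiv.Perm.iterate_eq_pow, ← Equiv.Perm.iterate_eq_pow] at h
  exact Function.iterate_injOn_Iio_minimalPeriod (List.mem_range.1 hk) (List.mem_range.1 hl) h

/-! ### Paths around a vertex of the tree -/

variable {T} in
/-- The arrows of a path. -/
def pathDarts {i : T.Edge} : {j : T.Edge} → Quiver.Path i j → List T.graph.Dart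
  | _, .nil => []
  | _, .cons p a => pathDarts p ++ [a.1]

variable {T} in
theorem pathDarts_comp {i j k : T.Edge} (p : Quiver.Path i j) (q : Quiver.Path j k) :
    pathDarts (p.comp q) = pathDarts p ++ pathDarts q := by
  induction q with
  | nil => simp [pathDarts]
  | cons q a ih => simp [pathDarts, ih]

/-- The path of length `k` around `d.fst` starting at the edge of `d`. -/
def arc (d : T.graph.Dart) : (k : ℕ) → Quiver.Path (edgeOf d) (edgeOf ((T.next ^ k) d))
  | 0 => .nil
  | k + 1 => (arc d k).cons ⟨(T.next ^ k) d, rfl, by rw [pow_succ', Equiv.Perm.mul_apply]⟩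

theorem pathDarts_arc (d : T.graph.Dart) (k : ℕ) : pathDarts (T.arc d k) = T.arcDarts d k := by
  induction k with
  | zero => rfl
  | succ k ih => rw [arcDarts_succ, ← ih]; rfl

theorem ofPath_cons {i j k : T.Edge} (p : Quiver.Path i j) (a : j ⟶ k) :
    PathAlgebra.ofPath K (p.cons a) = PathAlgebra.ofPath K p * T.arrowElt K a.1 := by
  obtain ⟨d, rfl, rfl⟩ := a
  rw [arrowElt, PathAlgebra.ofPath_mul_comp]
  rfl

theorem ofPath_arc_succ (d : T.graph.Dart) (k : ℕ) :
    PathAlgebra.ofPath K (T.arc d (k + 1)) =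
      PathAlgebra.ofPath K (T.arc d k) * T.arrowElt K ((T.next ^ k) d) :=
  T.ofPath_cons K _ _

/-- A list of arrows that runs through the oriented cycle around a vertex of the tree once. -/
def IsFullTurn (L : List T.graph.Dart) : Prop := ∃ d, L = T.arcDarts d (T.period d)

variable {T} in
theorem IsFullTurn.fst_eq {L : List T.graph.Dart} (h : T.IsFullTurn L) {d d' : T.graph.Dart}
    (hd : d ∈ L) (hd' : d' ∈ L) : d.fst = d'.fst := by
  obtain ⟨e, rfl⟩ := h
  rw [T.fst_of_mem_arcDarts hd, T.fst_of_mem_arcDarts hd']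

variable [Fintype V]

instance finite_dart : Finite T.graph.Dart := by
  classical
  infer_instance

theorem mem_periodicPts (d : T.graph.Dart) : d ∈ Function.periodicPts T.next :=
  T.next.injective.mem_periodicPts d

theorem period_pos (d : T.graph.Dart) : 0 < T.period d :=
  Function.minimalPeriod_pos_of_mem_periodicPts (T.mem_periodicPts d)

theorem period_next_pow (d : T.graph.Dart) (k : ℕ) : T.period ((T.next ^ k) d) = T.period d := by
  rw [← Equiv.Perm.iterate_eq_pow]
  exact Function.minimalPeriod_apply_iterate (T.mem_periodicPts d) k

theorem exists_next_pow_eq {d d' : T.graph.Dart} (h : d.fst = d'.fst) :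
    ∃ k < T.period d, (T.next ^ k) d = d' := by
  obtain ⟨k, -, hk⟩ := (T.next_cyclic d d' h).exists_pow_eq'
  refine ⟨k % T.period d, Nat.mod_lt _ (T.period_pos d), ?_⟩
  rw [← hk, ← Equiv.Perm.iterate_eq_pow, ← Equiv.Perm.iterate_eq_pow]
  exact Function.iterate_mod_minimalPeriod_eq

theorem period_eq_of_fst_eq {d d' : T.graph.Dart} (h : d.fst = d'.fst) :
    T.period d = T.period d' := by
  obtain ⟨k, -, rfl⟩ := T.exists_next_pow_eq h
  rw [period_next_pow]

theorem mem_arcDarts_period_iff {d d' : T.graph.Dart} :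
    d' ∈ T.arcDarts d (T.period d) ↔ d'.fst = d.fst := by
  refine ⟨T.fst_of_mem_arcDarts, fun h => ?_⟩
  obtain ⟨k, hk, hd⟩ := T.exists_next_pow_eq h.symm
  exact List.mem_map.2 ⟨k, List.mem_range.2 hk, hd⟩

theorem ofPath_arc_succ_eq_prod (d : T.graph.Dart) (k : ℕ) :
    PathAlgebra.ofPath K (T.arc d (k + 1)) =
      ((List.range (k + 1)).map fun k => T.arrowElt K ((T.next ^ k) d)).prod := by
  induction k with
  | zero =>
    rw [ofPath_arc_succ, arrowElt]
    refine (PathAlgebra.ofPath_mul_comp K (.nil : Quiver.Path (edgeOf d) _) _).trans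
      ((congrArg _ (Quiver.Path.nil_comp (T.arrow d).toPath)).trans ?_)
    rw [zero_add, List.range_one, List.map_singleton, List.prod_singleton]
    rfl
  | succ k ih =>
    rw [List.range_succ, List.map_append, List.prod_append, ← ih, ofPath_arc_succ]
    simp

theorem cycleElt_eq_ofPath_arc (d : T.graph.Dart) :
    T.cycleElt K d = PathAlgebra.ofPath K (T.arc d (T.period d)) := by
  obtain ⟨k, hk⟩ := Nat.exists_eq_succ_of_ne_zero (T.period_pos d).ne'
  rw [hk, ofPath_arc_succ_eq_prod, cycleElt, ← Nat.succ_eq_add_one, ← hk]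
  rfl

/-! ### The symmetrizing form -/

open Classical in
/-- The linear form on the path algebra that is `1` on the paths running once through an oriented
cycle around a vertex of the tree and `0` on the other paths. -/
def trace : PathAlgebra K T.Edge →ₗ[K] K :=
  Finsupp.linearCombination K fun p => if T.IsFullTurn (pathDarts p.2.2) then (1 : K) else 0

open Classical in
theorem trace_ofPath {i j : T.Edge} (p : Quiver.Path i j) :
    T.trace K (PathAlgebra.ofPath K p) = if T.IsFullTurn (pathDarts p) then (1 : K) else 0 := by
  unfold trace PathAlgebra.ofPath
  erw [Finsupp.linearCombination_single, one_smul]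

open Classical in
theorem trace_ofPath_mul_mul {i j i' j' i'' j'' : T.Edge} (p : Quiver.Path i j)
    (q : Quiver.Path i' j') (r : Quiver.Path i'' j'') :
    T.trace K (PathAlgebra.ofPath K p * PathAlgebra.ofPath K q * PathAlgebra.ofPath K r) =
      if j = i' ∧ j' = i'' ∧ T.IsFullTurn (pathDarts p ++ pathDarts q ++ pathDarts r)
        then (1 : K) else 0 := by
  by_cases h : j = i'
  · by_cases h' : j' = i''
    · subst h h'
      simp [PathAlgebra.ofPath_mul_comp, trace_ofPath, pathDarts_comp]
    · subst h
      rw [PathAlgebra.ofPath_mul_comp, PathAlgebra.ofPath_mul_of_ne K _ _ h']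
      simp [h']
  · rw [PathAlgebra.ofPath_mul_of_ne K _ _ h]
    simp [h]

theorem isFullTurn_append_iff (L M : List T.graph.Dart) (d : T.graph.Dart) :
    T.IsFullTurn (L ++ T.arcDarts d (T.period d) ++ M) ↔ L = [] ∧ M = [] := by
  constructor
  · rintro ⟨e, he⟩
    have hd : d ∈ T.arcDarts e (T.period e) := by
      rw [← he]
      simp [T.mem_arcDarts_period_iff]
    have hl := congrArg List.length he
    rw [← T.period_eq_of_fst_eq (T.fst_of_mem_arcDarts hd)] at hl
    simp only [List.length_append, length_arcDarts] at hl
    exact ⟨List.length_eq_zero_iff.1 (by lia), List.length_eq_zero_iff.1 (by lia)⟩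
  · rintro ⟨rfl, rfl⟩
    exact ⟨d, by simp⟩

theorem trace_mul_arrowElt_mul_arrowElt_mul {d d' : T.graph.Dart} (h : d.fst ≠ d'.fst)
    (a b : PathAlgebra K T.Edge) :
    T.trace K (a * (T.arrowElt K d * T.arrowElt K d') * b) = 0 := by
  induction a using PathAlgebra.induction_ofPath with
  | h0 => simp
  | hadd a a' h h' => rw [add_mul, add_mul, map_add, h, h', add_zero]
  | hp c i j p =>
    induction b using PathAlgebra.induction_ofPath with
    | h0 => simp
    | hadd a a' h h' => rw [mul_add, map_add, h, h', add_zero]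
    | hp c' i' j' q =>
      rw [smul_mul_assoc, smul_mul_assoc, mul_smul_comm, map_smul, map_smul]
      by_cases hd : edgeOf (T.next d) = edgeOf d'
      · have he : T.arrowElt K d * T.arrowElt K d' =
            PathAlgebra.ofPath K ((T.arrow d).toPath.cons ⟨d', hd.symm, rfl⟩) := by
          rw [ofPath_cons]
          rfl
        rw [he, trace_ofPath_mul_mul, if_neg, smul_zero, smul_zero]
        rintro ⟨-, -, hc⟩
        exact h (hc.fst_eq (by simp [pathDarts, Quiver.Hom.toPath, arrow])
          (by simp [pathDarts, Quiver.Hom.toPath, arrow]))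
      · rw [arrowElt, arrowElt, PathAlgebra.ofPath_mul_of_ne K _ _ hd]
        simp

theorem trace_mul_cycleElt_mul (d : T.graph.Dart) (a b : PathAlgebra K T.Edge) :
    T.trace K (a * T.cycleElt K d * b) = T.trace K (a * T.cycleElt K d.symm * b) := by
  induction a using PathAlgebra.induction_ofPath with
  | h0 => simp
  | hadd a a' h h' => simp only [add_mul, map_add, h, h']
  | hp c i j p =>
    induction b using PathAlgebra.induction_ofPath with
    | h0 => simp
    | hadd a a' h h' => simp only [mul_add, map_add, h, h']
    | hp c' i' j' q =>
      simp only [smul_mul_assoc, mul_smul_comm, map_smul, cycleElt_eq_ofPath_arc,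
        trace_ofPath_mul_mul]
      congr 3
      rw [pathDarts_arc, pathDarts_arc, isFullTurn_append_iff, isFullTurn_append_iff,
        next_pow_period, next_pow_period, edgeOf_symm]

/-- The largest congruence on whose classes the linear form `trace` is constant. -/
def traceCon : RingCon (PathAlgebra K T.Edge) where
  r x y := ∀ a b, T.trace K (a * x * b) = T.trace K (a * y * b)
  iseqv := ⟨fun _ _ _ => rfl, fun h a b => (h a b).symm, fun h h' a b => (h a b).trans (h' a b)⟩
  add' h h' a b := by simp only [mul_add, add_mul, map_add, h a b, h' a b]
  mul' {w x y z} h h' a b := by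
    have h1 := h a (y * b)
    have h2 := h' (a * x) b
    simp only [mul_assoc] at h1 h2 ⊢
    rw [h1, h2]

theorem trace_eq_zero_of_proj_eq_zero {x : PathAlgebra K T.Edge} (hx : T.proj K x = 0) :
    T.trace K x = 0 := by
  have hrel : ∀ ⦃x y⦄, T.Rel K x y → (T.traceCon K).mk' x = (T.traceCon K).mk' y := by
    rintro x y (⟨d, d', -, hne⟩ | ⟨d⟩) <;> refine (RingCon.eq _).2 fun a b => ?_
    · rw [T.trace_mul_arrowElt_mul_arrowElt_mul K hne, mul_zero, zero_mul, map_zero]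
    · exact T.trace_mul_cycleElt_mul K d a b
  have h0 : RingQuot.mkRingHom (T.Rel K) x = 0 := by
    rw [← RingQuot.mkAlgHom_coe K]
    exact hx
  have h : (T.traceCon K).mk' x = (T.traceCon K).mk' 0 := by
    have := congrArg (RingQuot.lift ⟨(T.traceCon K).mk', hrel⟩) h0
    rwa [RingQuot.lift_mkRingHom_apply, map_zero, ← map_zero (T.traceCon K).mk'] at this
  simpa using (RingCon.eq _).1 h 1 1

theorem proj_cycleElt_ne_zero (d : T.graph.Dart) : T.proj K (T.cycleElt K d) ≠ 0 := by
  intro h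
  have := T.trace_eq_zero_of_proj_eq_zero K h
  rw [cycleElt_eq_ofPath_arc, trace_ofPath, pathDarts_arc, if_pos ⟨d, rfl⟩] at this
  exact one_ne_zero this

/-! ### Nonzero products -/

theorem exists_ofPath_arc_mul_eq (d : T.graph.Dart) {k l : ℕ} (h : k ≤ l) :
    ∃ x, PathAlgebra.ofPath K (T.arc d l) = PathAlgebra.ofPath K (T.arc d k) * x := by
  induction l, h using Nat.le_induction with
  | base => exact ⟨1, (mul_one _).symm⟩
  | succ l _ ih =>
    obtain ⟨x, hx⟩ := ih
    exact ⟨x * T.arrowElt K ((T.next ^ l) d), by rw [ofPath_arc_succ, hx, mul_assoc]⟩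

theorem proj_ofPath_arc_ne_zero (d : T.graph.Dart) {k : ℕ} (h : k ≤ T.period d) :
    T.proj K (PathAlgebra.ofPath K (T.arc d k)) ≠ 0 := by
  intro h0
  obtain ⟨x, hx⟩ := T.exists_ofPath_arc_mul_eq K d h
  apply T.proj_cycleElt_ne_zero K d
  rw [cycleElt_eq_ofPath_arc, hx, map_mul, h0, zero_mul]

theorem proj_arrowElt_mul_next_ne_zero (d : T.graph.Dart) (h : 2 ≤ T.period d) :
    T.proj K (T.arrowElt K d) * T.proj K (T.arrowElt K (T.next d)) ≠ 0 := by
  have := T.proj_ofPath_arc_ne_zero K d h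
  rw [ofPath_arc_succ_eq_prod] at this
  simpa [List.range_succ] using this

theorem fst_eq_of_proj_mul_ne_zero {d d' : T.graph.Dart}
    (h : T.proj K (T.arrowElt K d) * T.proj K (T.arrowElt K d') ≠ 0) : d.fst = d'.fst := by
  by_contra hne
  apply h
  by_cases hd : edgeOf (T.next d) = edgeOf d'
  · rw [← map_mul, proj, RingQuot.mkAlgHom_rel K (Rel.zero d d' hd hne), map_zero]
  · rw [← map_mul, arrowElt, arrowElt, PathAlgebra.ofPath_mul_of_ne K _ _ hd, map_zero]

/-- Two edges of the tree have a common vertex. -/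
def SharesVertex (i j : T.Edge) : Prop :=
  ∃ d d' : T.graph.Dart, edgeOf d = i ∧ edgeOf d' = j ∧ d.fst = d'.fst

theorem sharesVertex_of_proj_ofPath_ne_zero {i j : T.Edge} (p : Quiver.Path i j)
    (hp : T.proj K (PathAlgebra.ofPath K p) ≠ 0) : T.SharesVertex i j := by
  suffices h : i = j ∨ ∃ (k : T.Edge) (q : Quiver.Path i k)
      (d d' : T.graph.Dart), edgeOf d' = i ∧ d'.fst = d.fst ∧ edgeOf (T.next d) = j ∧
      PathAlgebra.ofPath K p = PathAlgebra.ofPath K q * T.arrowElt K d by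
    obtain rfl | ⟨k, q, d, d', hi, hf, hj, -⟩ := h
    · obtain ⟨d, hd⟩ := T.exists_edgeOf_eq i
      exact ⟨d, d, hd, hd, rfl⟩
    · exact ⟨d', T.next d, hi, hj, by rw [hf, T.next_fst]⟩
  induction p with
  | nil => exact .inl rfl
  | cons p a ih =>
    rw [ofPath_cons, map_mul] at hp
    refine .inr ⟨_, p, a.1, ?_⟩
    obtain rfl | ⟨k, q, d, d', hi, hf, hj, hq⟩ := ih (left_ne_zero_of_mul hp)
    · exact ⟨a.1, a.2.1, rfl, a.2.2, T.ofPath_cons K p a⟩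
    · rw [hq, map_mul, mul_assoc] at hp
      exact ⟨d', hi, hf.trans (T.fst_eq_of_proj_mul_ne_zero K (right_ne_zero_of_mul hp)),
        a.2.2, T.ofPath_cons K p a⟩

theorem exists_idem_mul_mul_idem_ne_zero_iff (i j : T.Edge) :
    (∃ x, T.idem K i * x * T.idem K j ≠ 0) ↔ T.SharesVertex i j := by
  constructor
  · rintro ⟨x, hx⟩
    by_contra hs
    apply hx
    clear hx
    obtain ⟨x, rfl⟩ := RingQuot.mkAlgHom_surjective K (T.Rel K) x
    change T.idem K i * T.proj K x * _ = 0
    induction x using PathAlgebra.induction_ofPath with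
    | h0 => simp
    | hadd a a' h h' => rw [map_add, mul_add, add_mul, h, h', add_zero]
    | hp c k l p =>
      rw [map_smul, mul_smul_comm, smul_mul_assoc]
      unfold idem
      rw [← map_mul, ← map_mul]
      by_cases hk : i = k
      · by_cases hl : l = j
        · subst hk hl
          rw [PathAlgebra.ofPath_mul_comp, PathAlgebra.ofPath_mul_comp]
          by_contra h0
          exact hs (T.sharesVertex_of_proj_ofPath_ne_zero K _ (right_ne_zero_of_smul h0))
        · rw [mul_assoc, PathAlgebra.ofPath_mul_of_ne K _ _ hl, mul_zero, map_zero, smul_zero]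
      · rw [PathAlgebra.ofPath_mul_of_ne K _ _ hk, zero_mul, map_zero, smul_zero]
  · rintro ⟨d, d', rfl, rfl, h⟩
    obtain ⟨k, hk, rfl⟩ := T.exists_next_pow_eq h
    refine ⟨T.proj K (PathAlgebra.ofPath K (T.arc d k)), ?_⟩
    unfold idem
    rw [← map_mul, ← map_mul, PathAlgebra.ofPath_mul_comp, PathAlgebra.ofPath_mul_comp,
      Quiver.Path.nil_comp, Quiver.Path.comp_nil]
    exact T.proj_ofPath_arc_ne_zero K d hk.le

/-! ### `A`-cycles -/

variable {T K} in
theorem IsArrowChain.fst_eq {L : List T.graph.Dart} (h : T.IsArrowChain K L)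
    {d d' : T.graph.Dart} (hd : d ∈ L) (hd' : d' ∈ L) : d.fst = d'.fst := by
  have hc : (L.map fun d => d.fst).IsChain (· = ·) :=
    (List.isChain_map _).2 (h.2.imp fun _ _ => T.fst_eq_of_proj_mul_ne_zero K)
  exact hc.pairwise.forall_of_forall (fun _ _ => rfl) (List.mem_map_of_mem hd)
    (List.mem_map_of_mem hd')

theorem isArrowChain_arcDarts_period (d : T.graph.Dart) :
    T.IsArrowChain K (T.arcDarts d (T.period d)) := by
  refine ⟨T.nodup_arcDarts_period d, ?_⟩
  rw [arcDarts, List.isChain_map, List.isChain_range]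
  intro k hk
  rw [pow_succ', Equiv.Perm.mul_apply]
  exact T.proj_arrowElt_mul_next_ne_zero K _ (by rw [period_next_pow]; lia)

theorem isACycle_arcDarts_period (d : T.graph.Dart) :
    T.IsACycle K (T.arcDarts d (T.period d)) := by
  refine ⟨T.isArrowChain_arcDarts_period K d, fun L hL hs => ?_⟩
  have hd : d ∈ L := hs.subset (T.mem_arcDarts_period_iff.2 rfl)
  refine (hs.eq_of_length_le (List.Subperm.length_le (hL.1.subperm fun e he => ?_))).symm
  exact T.mem_arcDarts_period_iff.2 (hL.fst_eq he hd)

theorem sameACycle_iff_sharesVertex (i j : T.Edge) :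
    T.SameACycle K i j ↔ T.SharesVertex i j := by
  constructor
  · rintro ⟨L, hL, ⟨d, hd, hi⟩, ⟨d', hd', hj⟩⟩
    have hf := hL.1.fst_eq hd hd'
    rcases hi with rfl | rfl <;> rcases hj with rfl | rfl <;>
      exact ⟨_, _, rfl, rfl, by simp only [T.next_fst, hf]⟩
  · rintro ⟨d, d', rfl, rfl, h⟩
    exact ⟨_, T.isACycle_arcDarts_period K d, ⟨d, T.mem_arcDarts_period_iff.2 rfl, .inl rfl⟩,
      ⟨d', T.mem_arcDarts_period_iff.2 h.symm, .inl rfl⟩⟩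

/-! ### Morphisms between the indecomposable projective modules -/

theorem exists_projMod_hom_ne_zero_iff (i j : T.Edge) :
    (∃ f : T.projMod K i ⟶ T.projMod K j, f ≠ 0) ↔
      ∃ x, T.idem K i * x * T.idem K j ≠ 0 := by
  constructor
  · rintro ⟨f, hf⟩
    by_contra! h
    apply hf
    ext ⟨y, hy⟩
    obtain ⟨a, rfl⟩ := Ideal.mem_span_singleton'.1 hy
    have hmem : T.idem K i ∈ Ideal.span {T.idem K i} := Ideal.subset_span rfl
    obtain ⟨b, hb⟩ := Ideal.mem_span_singleton'.1 (f.hom ⟨T.idem K i, hmem⟩).2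
    have h1 : (⟨a * T.idem K i, hy⟩ : Ideal.span {T.idem K i}) =
        (a * T.idem K i) • ⟨T.idem K i, hmem⟩ :=
      Subtype.ext (by simp [mul_assoc, idem_mul_self])
    rw [h1]
    erw [map_smul]
    change a * T.idem K i * (f.hom ⟨T.idem K i, hmem⟩).1 = 0
    rw [← hb, mul_assoc, ← mul_assoc (T.idem K i), h, mul_zero]
  · rintro ⟨x, hx⟩
    let g : T.projMod K i →ₗ[T.Alg K] T.projMod K j :=
      ((LinearMap.toSpanSingleton (T.Alg K) (T.Alg K) (x * T.idem K j)).comp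
        (Submodule.subtype (Ideal.span {T.idem K i}))).codRestrict
        (Ideal.span {T.idem K j}) fun y => Ideal.mem_span_singleton'.2 ⟨y.1 * x, by simp [mul_assoc]⟩
    refine ⟨ModuleCat.ofHom g, fun h => hx ?_⟩
    have h1 := congrArg (fun f => (f.hom ⟨T.idem K i, Ideal.subset_span rfl⟩).1) h
    simpa [g, mul_assoc] using h1

end BrauerTree

/-! ### Morphisms between stalk complexes in the homotopy category -/

theorem exists_quotient_single_hom_ne_zero_iff {C : Type u} [Category.{v} C] [Preadditive C]
    [Limits.HasZeroObject C] (M N : C) (p q : ℤ) :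
    (∃ f : (HomotopyCategory.quotient C (ComplexShape.up ℤ)).obj
        ((HomologicalComplex.single C (ComplexShape.up ℤ) p).obj M) ⟶
      (HomotopyCategory.quotient C (ComplexShape.up ℤ)).obj
        ((HomologicalComplex.single C (ComplexShape.up ℤ) q).obj N), f ≠ 0) ↔
      p = q ∧ ∃ g : M ⟶ N, g ≠ 0 := by
  constructor
  · rintro ⟨f, hf⟩
    obtain ⟨f, rfl⟩ := (HomotopyCategory.quotient C (ComplexShape.up ℤ)).map_surjective f
    obtain rfl : p = q := by
      by_contra hpq
      apply hf
      have : f = 0 := HomologicalComplex.from_single_hom_ext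
        ((HomologicalComplex.isZero_single_obj_X _ _ _ _ hpq).eq_of_tgt _ _)
      rw [this, Functor.map_zero]
    obtain ⟨g, rfl⟩ := (HomologicalComplex.single C (ComplexShape.up ℤ) p).map_surjective f
    refine ⟨rfl, g, ?_⟩
    rintro rfl
    exact hf (by simp)
  · rintro ⟨rfl, g, hg⟩
    refine ⟨(HomotopyCategory.quotient C (ComplexShape.up ℤ)).map
      ((HomologicalComplex.single C (ComplexShape.up ℤ) p).map g), fun h => hg ?_⟩
    obtain ⟨h⟩ := (HomotopyCategory.quotient_map_eq_zero_iff _).1 h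
    apply (HomologicalComplex.single C (ComplexShape.up ℤ) p).map_injective
    rw [Functor.map_zero]
    refine HomologicalComplex.from_single_hom_ext ?_
    rw [h.comm p]
    simp [dNext, prevD]

theorem Kb.exists_hom_ne_zero_iff {A : Type w} [Ring A]
    {X Y X' Y' : CochainComplex (ModuleCat.{w} A) ℤ}
    (hX : perfectComplexes A X) (hY : perfectComplexes A Y) (φ : X ≅ X') (ψ : Y ≅ Y') :
    (∃ f : Kb.of X hX ⟶ Kb.of Y hY, f ≠ 0) ↔
      ∃ f : (HomotopyCategory.quotient _ _).obj X' ⟶ (HomotopyCategory.quotient _ _).obj Y',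
        f ≠ 0 := by
  let e := ((HomotopyCategory.quotient _ _).mapIso φ).homCongr
    ((HomotopyCategory.quotient _ _).mapIso ψ)
  have he0 : e 0 = 0 := by simp [e]
  constructor
  · rintro ⟨f, hf⟩
    refine ⟨e f.hom, fun h => hf (InducedCategory.hom_ext ?_)⟩
    apply e.injective
    rw [h]
    exact he0.symm
  · rintro ⟨f, hf⟩
    refine ⟨InducedCategory.homMk (e.symm f), fun h => hf ?_⟩
    have h' : e.symm f = 0 :=
      congrArg (fun g : Kb.of X hX ⟶ Kb.of Y hY => g.hom) h
    rw [← e.apply_symm_apply f, h', he0]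

end

open CategoryTheory Limits in
theorem hom_between_stalks_nonzero_iff {K : Type u} [Field K] [IsAlgClosed K]
    {V : Type v} [Fintype V] (T : BrauerTree V)
    [HasDerivedCategory.{w} (ModuleCat.{max u v} (T.Alg K))]
    (Pi Pj : CochainComplex (ModuleCat.{max u v} (T.Alg K)) ℤ)
    (i j : T.Edge) (p q : ℤ)
    (hPi : T.IsStalk K Pi i p) (hPj : T.IsStalk K Pj j q)
    (hpt : IsPartialTilting (Pi ⊞ Pj)) :
    (∃ f : Kb.of Pi hPi.perfect ⟶ Kb.of Pj hPj.perfect, f ≠ 0) ↔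
      p = q ∧ T.SameACycle K i j := by
  rw [Kb.exists_hom_ne_zero_iff hPi.perfect hPj.perfect hPi.some hPj.some,
    exists_quotient_single_hom_ne_zero_iff, T.exists_projMod_hom_ne_zero_iff K,
    T.exists_idem_mul_mul_idem_ne_zero_iff K, T.sameACycle_iff_sharesVertex K]
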